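/- Sphere case. Assume c² < −4(b k + k²). Define H(s) = −2 G(s) + 4 μ c (1 − cos s) + 4 μ² sin² s, where G(s) = (k²/2) sin²s + b k (1 − cos s) − k² (1 − cos s)², and set s₁ = sup{ ŝ > 0 : H(s) ≥ 0 for all s ∈ (0, ŝ] }. Let W : (0,∞) → ℝ³ be a nonconstant similarity spherical profile with lim_{r→0⁺} W(r) = (1,0,0) and lim_{r→0⁺} r |W′(r)| = 0, and set s(r) = arccos(W(r)·e₀) ∈ [0,π]. Then s⋆ := lim_{r→∞} s(r) exists, 0 < s⋆ ≤ min{π, s₁}, and s(r) = s⋆ + O(r^{−2}) as r → ∞. -/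

import Mathlib

open Set Filter Asymptotics

/-- Euclidean dot product on `ℝ³`. -/
noncomputable def dot3 (v w : Fin 3 → ℝ) : ℝ := v 0 * w 0 + v 1 * w 1 + v 2 * w 2

/-- Euclidean norm on `ℝ³`. -/
noncomputable def norm3 (v : Fin 3 → ℝ) : ℝ := Real.sqrt (dot3 v v)

/-- Cross product on `ℝ³`. -/
noncomputable def cross3 (v w : Fin 3 → ℝ) : Fin 3 → ℝ :=
  ![v 1 * w 2 - v 2 * w 1, v 2 * w 0 - v 0 * w 2, v 0 * w 1 - v 1 * w 0]

/-- The north pole `e₀ = (1,0,0)`. -/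
noncomputable def e0 : Fin 3 → ℝ := ![1, 0, 0]

/-- `g(w) = (k²/2)(1 − w²) + bk(1 − w) − k²(1 − w)²`. -/
noncomputable def gfun (k b : ℝ) (w : ℝ) : ℝ :=
  k ^ 2 / 2 * (1 - w ^ 2) + b * k * (1 - w) - k ^ 2 * (1 - w) ^ 2

/-- `G(s)` in the sphere case. -/
noncomputable def Gsph (k b : ℝ) (s : ℝ) : ℝ :=
  k ^ 2 / 2 * (Real.sin s) ^ 2 + b * k * (1 - Real.cos s) - k ^ 2 * (1 - Real.cos s) ^ 2

/-- `H(s) = −2G(s) + 4μc(1 − cos s) + 4μ² sin²s`. -/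
noncomputable def Hfun (k b c μ : ℝ) (s : ℝ) : ℝ :=
  -2 * Gsph k b s + 4 * μ * c * (1 - Real.cos s) + 4 * μ ^ 2 * (Real.sin s) ^ 2

/-- A similarity spherical profile on `J ⊆ (0,∞)`: a twice differentiable
`W : J → S² ⊂ ℝ³` solving the reduced similarity equation (5.5). -/
def IsSimProfile (k b c μ : ℝ) (J : Set ℝ) (W : ℝ → Fin 3 → ℝ) : Prop :=
  J ⊆ Ioi (0:ℝ) ∧
  (∀ r ∈ J, DifferentiableAt ℝ W r ∧ DifferentiableAt ℝ (deriv W) r) ∧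
  (∀ r ∈ J, dot3 (W r) (W r) = 1) ∧
  (∀ r ∈ J,
    deriv (deriv W) r + dot3 (deriv W r) (deriv W r) • W r + (1 / r) • deriv W r
      + (deriv (gfun k b) (dot3 (W r) e0) / r ^ 2) • (e0 - dot3 (W r) e0 • W r)
      + μ • (e0 - dot3 (W r) e0 • W r)
      + (c / r - r / 2) • cross3 (W r) (deriv W r) = 0)


/-- Algebraic bound: `N = O(f)`. -/
lemma aux_bound (C f N U m4 : ℝ) (hC : 0 ≤ C) (hm : 0 ≤ m4) (hf : 0 ≤ f)
    (hU : U ≤ C * f + m4 * |N|) (hN : N ^ 2 ≤ U * (2 * f)) :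
    |N| ≤ (2 * C + 1 + 2 * m4) * f := by
  by_contra h
  push Not at h
  have h0 : N ^ 2 = |N| ^ 2 := (sq_abs N).symm
  have hNn : 0 ≤ |N| := abs_nonneg N
  have h1 : |N| ^ 2 ≤ 2 * C * f ^ 2 + 2 * m4 * f * |N| := by
    rw [← h0]
    nlinarith [mul_le_mul_of_nonneg_right hU (by linarith : (0:ℝ) ≤ 2 * f)]
  have hpos : 0 < |N| := lt_of_le_of_lt (by positivity) h
  have h2 : (2 * C + 1 + 2 * m4) * f * |N| < |N| ^ 2 := by nlinarith
  have h3 : 2 * C * f * |N| + f * |N| < 2 * C * f ^ 2 := by nlinarith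
  have hfN : f ≤ |N| := by nlinarith [mul_nonneg hC hf, mul_nonneg hm hf]
  nlinarith [mul_nonneg (mul_nonneg hC hf) (sub_nonneg.2 hfN), mul_nonneg hf hNn]

/-- Monotonicity of `p ∓ B/(2r²)`. -/
lemma aux_mono (p pd : ℝ → ℝ) (B r0 : ℝ) (hr0 : 0 < r0)
    (hp : ∀ r, r0 ≤ r → HasDerivAt p (pd r) r)
    (hB : ∀ r, r0 ≤ r → |pd r| ≤ B / r ^ 3) :
    MonotoneOn (fun r => p r - B / 2 * (r ^ 2)⁻¹) (Ici r0) ∧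
    AntitoneOn (fun r => p r + B / 2 * (r ^ 2)⁻¹) (Ici r0) := by
  have hd : ∀ r, r0 ≤ r → HasDerivAt (fun r : ℝ => B / 2 * (r ^ 2)⁻¹) (-(B / r ^ 3)) r := by
    intro r hr
    have hr' : r ≠ 0 := by linarith
    have h := ((hasDerivAt_pow 2 r).inv (by positivity)).const_mul (B / 2)
    refine h.congr_deriv ?_
    field_simp
    norm_num
  constructor
  · apply monotoneOn_of_hasDerivWithinAt_nonneg (convex_Ici r0)
      (f' := fun r => pd r - -(B / r ^ 3))
    · intro r hr
      exact ((hp r hr).sub (hd r hr)).continuousAt.continuousWithinAt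
    · intro r hr
      rw [interior_Ici] at hr
      exact ((hp r hr.le).sub (hd r hr.le)).hasDerivWithinAt
    · intro r hr
      rw [interior_Ici] at hr
      have := neg_le_of_abs_le (hB r hr.le)
      linarith
  · apply antitoneOn_of_hasDerivWithinAt_nonpos (convex_Ici r0)
      (f' := fun r => pd r + -(B / r ^ 3))
    · intro r hr
      exact ((hp r hr).add (hd r hr)).continuousAt.continuousWithinAt
    · intro r hr
      rw [interior_Ici] at hr
      exact ((hp r hr.le).add (hd r hr.le)).hasDerivWithinAt
    · intro r hr
      rw [interior_Ici] at hr
      have := le_of_abs_le (hB r hr.le)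
      linarith

lemma aux_inv_sq (K : ℝ) : Tendsto (fun r : ℝ => K * (r ^ 2)⁻¹) atTop (nhds 0) := by
  have h : Tendsto (fun r : ℝ => (r ^ 2)⁻¹) atTop (nhds 0) :=
    (tendsto_pow_atTop (by norm_num : (2:ℕ) ≠ 0)).inv_tendsto_atTop
  simpa using h.const_mul K

lemma aux_rate (p pd : ℝ → ℝ) (B r0 l : ℝ) (hr0 : 0 < r0)
    (hp : ∀ r, r0 ≤ r → HasDerivAt p (pd r) r)
    (hB : ∀ r, r0 ≤ r → |pd r| ≤ B / r ^ 3) (hl : Tendsto p atTop (nhds l)) :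
    ∀ r, r0 ≤ r → |p r - l| ≤ B / 2 * (r ^ 2)⁻¹ := by
  obtain ⟨h1, h2⟩ := aux_mono p pd B r0 hr0 hp hB
  intro r hr
  have l1 : Tendsto (fun r => p r - B / 2 * (r ^ 2)⁻¹) atTop (nhds l) := by
    simpa using hl.sub (aux_inv_sq (B / 2))
  have l2 : Tendsto (fun r => p r + B / 2 * (r ^ 2)⁻¹) atTop (nhds l) := by
    simpa using hl.add (aux_inv_sq (B / 2))
  have e1 : p r - B / 2 * (r ^ 2)⁻¹ ≤ l := by
    refine ge_of_tendsto l1 ?_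
    filter_upwards [eventually_ge_atTop r] with x hx
    exact h1 hr (le_trans hr hx) hx
  have e2 : l ≤ p r + B / 2 * (r ^ 2)⁻¹ := by
    refine le_of_tendsto l2 ?_
    filter_upwards [eventually_ge_atTop r] with x hx
    exact h2 hr (le_trans hr hx) hx
  rw [abs_le]
  constructor <;> linarith

lemma aux_exists (p pd : ℝ → ℝ) (B D r0 : ℝ) (hr0 : 0 < r0)
    (hp : ∀ r, r0 ≤ r → HasDerivAt p (pd r) r)
    (hB : ∀ r, r0 ≤ r → |pd r| ≤ B / r ^ 3) (hB0 : 0 ≤ B) (hD : ∀ r, r0 ≤ r → p r ≤ D) :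
    ∃ l, Tendsto p atTop (nhds l) := by
  obtain ⟨h1, -⟩ := aux_mono p pd B r0 hr0 hp hB
  set q := fun r => p (max r r0) - B / 2 * ((max r r0) ^ 2)⁻¹ with hq
  have hm : Monotone q := by
    intro a b hab
    exact h1 (le_max_right a r0) (le_max_right b r0) (max_le_max_right r0 hab)
  have hbd : BddAbove (range q) := by
    refine ⟨D, ?_⟩
    rintro _ ⟨a, rfl⟩
    have := hD _ (le_max_right a r0)
    have h2 : 0 ≤ B / 2 * ((max a r0) ^ 2)⁻¹ := by positivity
    simp only [hq]; linarith
  have ht := tendsto_atTop_ciSup hm hbd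
  refine ⟨_, (by simpa using ht.add (aux_inv_sq (B / 2)) : Tendsto
    (fun r => q r + B / 2 * (r ^ 2)⁻¹) atTop (nhds (⨆ i, q i))).congr' ?_⟩
  filter_upwards [eventually_ge_atTop r0] with x hx
  simp [hq, max_eq_left hx]

/-- A nonnegative function with `|f'| ≤ K f / r` vanishing at one point vanishes. -/
lemma aux_gronwall (f fd : ℝ → ℝ) (K : ℝ)
    (hf0 : ∀ r, 0 < r → 0 ≤ f r)
    (hfd : ∀ r, 0 < r → HasDerivAt f (fd r) r)
    (hK : ∀ r, 0 < r → |r * fd r| ≤ K * f r) (r1 : ℝ) (hr1 : 0 < r1) (h1 : f r1 = 0) :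
    ∀ r, 0 < r → f r = 0 := by
  have hd : ∀ (K : ℝ) r, 0 < r → HasDerivAt (fun r => f r * r ^ K)
      (r ^ (K - 1) * (r * fd r + K * f r)) r := by
    intro K r hr
    refine ((hfd r hr).mul (Real.hasDerivAt_rpow_const (p := K) (Or.inl hr.ne'))).congr_deriv ?_
    have : r ^ K = r ^ (K - 1) * r := by
      rw [← Real.rpow_add_one hr.ne']; ring_nf
    rw [this]; ring
  have hmono : MonotoneOn (fun r => f r * r ^ K) (Ioi 0) := by
    apply monotoneOn_of_hasDerivWithinAt_nonneg (convex_Ioi 0)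
    · intro r hr
      exact (hd K r hr).continuousAt.continuousWithinAt
    · intro r hr
      rw [interior_Ioi] at hr
      exact (hd K r hr).hasDerivWithinAt
    · intro r hr
      rw [interior_Ioi] at hr
      have := neg_le_of_abs_le (hK r hr)
      have hr' : (0:ℝ) < r := hr
      exact mul_nonneg (by positivity) (by linarith)
  have hanti : AntitoneOn (fun r => f r * r ^ (-K)) (Ioi 0) := by
    apply antitoneOn_of_hasDerivWithinAt_nonpos (convex_Ioi 0)
    · intro r hr
      exact (hd (-K) r hr).continuousAt.continuousWithinAt
    · intro r hr
      rw [interior_Ioi] at hr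
      exact (hd (-K) r hr).hasDerivWithinAt
    · intro r hr
      rw [interior_Ioi] at hr
      have := le_of_abs_le (hK r hr)
      have hr' : (0:ℝ) < r := hr
      exact mul_nonpos_of_nonneg_of_nonpos (by positivity) (by linarith)
  intro r hr
  have key : ∀ L : ℝ, f r * r ^ L ≤ f r1 * r1 ^ L → f r = 0 := by
    intro L h
    rw [h1, zero_mul] at h
    have : 0 < r ^ L := by positivity
    have h2 := hf0 r hr
    nlinarith
  rcases le_total r r1 with h | h
  · exact key _ (hmono hr hr1 h)
  · exact key _ (hanti hr1 hr h)

/-- positivity of the limit -/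
lemma aux_pos (p pd : ℝ → ℝ) (K r0 l : ℝ) (hr0 : 0 < r0) (hK0 : 0 ≤ K)
    (hp : ∀ r, r0 ≤ r → HasDerivAt p (pd r) r)
    (hpos : 0 < p r0)
    (hp0 : ∀ r, r0 ≤ r → 0 ≤ p r)
    (hK : ∀ r, r0 ≤ r → |pd r| ≤ K * p r / r ^ 3) (hl : Tendsto p atTop (nhds l)) : 0 < l := by
  have hd : ∀ r, r0 ≤ r → HasDerivAt (fun r : ℝ => p r * Real.exp (-(K / 2) * (r ^ 2)⁻¹))
      (Real.exp (-(K / 2) * (r ^ 2)⁻¹) * (pd r + K * p r / r ^ 3)) r := by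
    intro r hr
    have hr' : r ≠ 0 := by linarith
    have h := ((hasDerivAt_pow 2 r).inv (by positivity)).const_mul (-(K / 2))
    refine ((hp r hr).mul h.exp).congr_deriv ?_
    simp only [Pi.inv_apply]
    field_simp
    norm_num
    ring
  have hm : MonotoneOn (fun r : ℝ => p r * Real.exp (-(K / 2) * (r ^ 2)⁻¹)) (Ici r0) := by
    apply monotoneOn_of_hasDerivWithinAt_nonneg (convex_Ici r0)
    · intro r hr
      exact (hd r hr).continuousAt.continuousWithinAt
    · intro r hr
      rw [interior_Ici] at hr
      exact (hd r hr.le).hasDerivWithinAt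
    · intro r hr
      rw [interior_Ici] at hr
      have := neg_le_of_abs_le (hK r hr.le)
      exact mul_nonneg (Real.exp_pos _).le (by linarith)
  have : p r0 * Real.exp (-(K / 2) * (r0 ^ 2)⁻¹) ≤ l := by
    refine ge_of_tendsto hl ?_
    filter_upwards [eventually_ge_atTop r0] with x hx
    have h1 := hm (le_refl r0 : r0 ∈ Ici r0) hx hx
    simp only at h1
    have h2 : Real.exp (-(K / 2) * (x ^ 2)⁻¹) ≤ 1 := by
      rw [Real.exp_le_one_iff]
      have : 0 ≤ K / 2 * (x ^ 2)⁻¹ := by positivity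
      linarith
    have := mul_le_mul_of_nonneg_left h2 (hp0 x hx)
    linarith
  exact lt_of_lt_of_le (mul_pos hpos (Real.exp_pos _)) this

lemma core_pi (f fd N U : ℝ → ℝ) (c C3 : ℝ) (hC3 : 0 ≤ C3)
    (hf : ∀ r, 0 < r → 0 ≤ f r ∧ f r ≤ 2)
    (hfd : ∀ r, 0 < r → HasDerivAt f (fd r) r)
    (hmd : ∀ r, 0 < r → HasDerivAt (fun r => N r + c * f r) (r ^ 2 / 2 * fd r) r)
    (hU0 : ∀ r, 0 < r → 0 ≤ U r)
    (hU : ∀ r, 0 < r → U r ≤ C3 * f r)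
    (hN : ∀ r, 0 < r → N r ^ 2 ≤ U r * (f r * (2 - f r)))
    (hl : Tendsto f atTop (nhds 2)) :
    ∃ K, ∀ r, 1 ≤ r → Real.sqrt (2 - f r) ≤ K * (r ^ 2)⁻¹ := by
  set n : ℝ → ℝ := fun r => N r + c * f r - 2 * c with hn
  set A : ℝ := 4 * C3 + 1 + 2 * |c| with hA
  have hA0 : 0 ≤ A := by positivity
  -- `|n| ≤ A √y`
  have hnb : ∀ r, 0 < r → |n r| ≤ A * Real.sqrt (2 - f r) := by
    intro r hr
    obtain ⟨h0, h2⟩ := hf r hr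
    set y := Real.sqrt (2 - f r) with hy
    have hy0 : 0 ≤ y := Real.sqrt_nonneg _
    have hyy : y ^ 2 = 2 - f r := Real.sq_sqrt (by linarith)
    have hy2 : y ≤ 2 := by nlinarith
    have h1 : N r ^ 2 ≤ ((4 * C3 + 1) * y) ^ 2 := by
      have a1 : U r ≤ C3 * 2 := (hU r hr).trans (by gcongr)
      have a2 : U r * (f r * (2 - f r)) ≤ (C3 * 2) * (2 * (2 - f r)) := by
        have : 0 ≤ 2 - f r := by linarith
        gcongr
      have a3 := hN r hr
      rw [← hyy] at a2 a3
      have : (0:ℝ) ≤ C3 * y ^ 2 := by positivity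
      have : (0:ℝ) ≤ C3 ^ 2 * y ^ 2 := by positivity
      nlinarith [sq_nonneg y]
    have h3 : |N r| ≤ (4 * C3 + 1) * y := abs_le_of_sq_le_sq h1 (by positivity)
    have h4 : n r = N r + -(c * y ^ 2) := by rw [hyy]; simp only [hn]; ring
    rw [h4]
    refine (abs_add_le _ _).trans ?_
    rw [abs_neg, abs_mul, abs_of_nonneg (sq_nonneg y)]
    have : |c| * y ^ 2 ≤ |c| * (2 * y) := by
      gcongr; nlinarith
    rw [hA]; nlinarith
  have hpd : ∀ r, 0 < r → HasDerivAt (fun r => (2 - f r) + 2 * n r * (r ^ 2)⁻¹)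
      (-(4 * n r / r ^ 3)) r := by
    intro r hr
    have h1 := ((hmd r hr).sub_const (2 * c)).const_mul 2
    have h2 := (hasDerivAt_pow 2 r).inv (by positivity)
    refine (((hfd r hr).const_sub 2).add (h1.mul h2)).congr_deriv ?_
    simp only [hn, Pi.inv_apply]
    field_simp
    norm_num
    ring
  have hnlim : Tendsto (fun r => (2 - f r) + 2 * n r * (r ^ 2)⁻¹) atTop (nhds 0) := by
    have h1 : Tendsto (fun r => 2 - f r) atTop (nhds 0) := by
      simpa using hl.const_sub 2
    have h2 : Tendsto (fun r => 2 * n r * (r ^ 2)⁻¹) atTop (nhds 0) := by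
      refine squeeze_zero_norm' ?_ (aux_inv_sq (2 * (A * 2)))
      filter_upwards [eventually_gt_atTop 0] with r hr
      have := hnb r hr
      have h3 : Real.sqrt (2 - f r) ≤ 2 := by
        rw [Real.sqrt_le_left (by norm_num)]; linarith [(hf r hr).1]
      rw [Real.norm_eq_abs, abs_mul, abs_mul, abs_of_pos (by norm_num : (0:ℝ) < 2),
        abs_of_nonneg (by positivity : (0:ℝ) ≤ (r ^ 2)⁻¹)]
      gcongr
      exact this.trans (by gcongr)
    simpa using h1.add h2
  refine ⟨4 * A, fun r hr => ?_⟩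
  have hr0 : 0 < r := by linarith
  set S := sSup ((fun x => Real.sqrt (2 - f x)) '' Ici r) with hS
  have hbd : BddAbove ((fun x => Real.sqrt (2 - f x)) '' Ici r) := by
    refine ⟨2, ?_⟩
    rintro _ ⟨x, hx, rfl⟩
    have hx0 : 0 < x := lt_of_lt_of_le hr0 hx
    simp only
    rw [Real.sqrt_le_left (by norm_num)]; linarith [(hf x hx0).1]
  have hle : ∀ x, r ≤ x → Real.sqrt (2 - f x) ≤ S := fun x hx =>
    le_csSup hbd ⟨x, hx, rfl⟩
  have hS0 : 0 ≤ S := (Real.sqrt_nonneg _).trans (hle r le_rfl)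
  have hrate := aux_rate _ _ (4 * (A * S)) r 0 hr0 (fun x hx => hpd x (hr0.trans_le hx))
    (fun x hx => by
      have hx0 : 0 < x := hr0.trans_le hx
      rw [abs_neg, abs_div, abs_mul, abs_of_pos (by norm_num : (0:ℝ) < 4),
        abs_of_pos (by positivity : 0 < x ^ 3)]
      gcongr
      exact (hnb x hx0).trans (by gcongr; exact hle x hx)) hnlim
  have hsq : ∀ x, r ≤ x → Real.sqrt (2 - f x) ≤ Real.sqrt (4 * A * S * (r ^ 2)⁻¹) := by
    intro x hx
    have hx0 : 0 < x := hr0.trans_le hx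
    apply Real.sqrt_le_sqrt
    have h1 := le_of_abs_le (hrate x hx)
    have h2 := neg_le_of_abs_le ((hnb x hx0).trans
      (mul_le_mul_of_nonneg_left (hle x hx) hA0))
    have h3 : (x ^ 2)⁻¹ ≤ (r ^ 2)⁻¹ := by gcongr
    have h4 : 0 ≤ (x ^ 2)⁻¹ := by positivity
    have h5 : 0 ≤ A * S := by positivity
    nlinarith [mul_le_mul_of_nonneg_left h3 h5, mul_le_mul_of_nonneg_right h2 h4]
  have hSS : S ≤ Real.sqrt (4 * A * S * (r ^ 2)⁻¹) := by
    apply csSup_le (Set.Nonempty.image _ ⟨r, le_refl r⟩)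
    rintro _ ⟨x, hx, rfl⟩
    exact hsq x hx
  have h2 : S ^ 2 ≤ 4 * A * S * (r ^ 2)⁻¹ := by
    have := pow_le_pow_left₀ hS0 hSS 2
    rwa [Real.sq_sqrt (by positivity)] at this
  refine (hle r le_rfl).trans ?_
  rcases hS0.eq_or_lt with h | h
  · rw [← h]; positivity
  · have : S * S ≤ (4 * A * (r ^ 2)⁻¹) * S := by nlinarith
    exact le_of_mul_le_mul_right this h

lemma core (f fd N U : ℝ → ℝ) (c C m4 : ℝ) (hC : 0 ≤ C) (hm4 : 0 ≤ m4)
    (hf : ∀ r, 0 < r → 0 ≤ f r ∧ f r ≤ 2)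
    (hfd : ∀ r, 0 < r → HasDerivAt f (fd r) r)
    (hmd : ∀ r, 0 < r → HasDerivAt (fun r => N r + c * f r) (r ^ 2 / 2 * fd r) r)
    (hU0 : ∀ r, 0 < r → 0 ≤ U r)
    (hU : ∀ r, 0 < r → U r ≤ C * f r + m4 * |N r|)
    (hN : ∀ r, 0 < r → N r ^ 2 ≤ U r * (f r * (2 - f r)))
    (hfb : ∀ r, 0 < r → (r * fd r) ^ 2 ≤ U r * (f r * (2 - f r)))
    (hne : ∃ r, 0 < r ∧ f r ≠ 0) :
    (∀ r, 0 < r → 0 < f r) ∧ ∃ l, 0 < l ∧ l ≤ 2 ∧ Tendsto f atTop (nhds l) ∧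
      (∃ K, ∀ r, 1 ≤ r → |f r - l| ≤ K * (r ^ 2)⁻¹) ∧
      (l = 2 → ∃ K, ∀ r, 1 ≤ r → Real.sqrt (2 - f r) ≤ K * (r ^ 2)⁻¹) := by
  set C2 : ℝ := 2 * C + 1 + 2 * m4 with hC2
  have hC20 : 0 ≤ C2 := by positivity
  have hNb : ∀ r, 0 < r → |N r| ≤ C2 * f r := by
    intro r hr
    obtain ⟨h0, h2⟩ := hf r hr
    refine aux_bound C (f r) (N r) (U r) m4 hC hm4 h0 (hU r hr) ((hN r hr).trans ?_)
    exact mul_le_mul_of_nonneg_left (by nlinarith) (hU0 r hr)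
  set C3 : ℝ := C + m4 * C2 with hC3
  have hC30 : 0 ≤ C3 := by positivity
  have hUb : ∀ r, 0 < r → U r ≤ C3 * f r := by
    intro r hr
    have := mul_le_mul_of_nonneg_left (hNb r hr) hm4
    have := hU r hr
    rw [hC3]; nlinarith
  have hfb' : ∀ r, 0 < r → |r * fd r| ≤ (2 * C3 + 1) * f r := by
    intro r hr
    obtain ⟨h0, h2⟩ := hf r hr
    refine abs_le_of_sq_le_sq ((hfb r hr).trans ?_) (by positivity)
    have h1 := hU0 r hr
    have h3 := hUb r hr
    calc U r * (f r * (2 - f r)) ≤ (C3 * f r) * (f r * 2) := by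
          gcongr; linarith
      _ ≤ ((2 * C3 + 1) * f r) ^ 2 := by
          nlinarith [mul_nonneg hC30 (sq_nonneg (f r)), sq_nonneg (f r),
            mul_nonneg (sq_nonneg C3) (sq_nonneg (f r))]
  have hpos : ∀ r, 0 < r → 0 < f r := by
    intro r hr
    rcases (hf r hr).1.eq_or_lt with h | h
    · obtain ⟨r2, hr2, hf2⟩ := hne
      exact absurd (aux_gronwall f fd _ (fun r hr => (hf r hr).1) hfd hfb' r hr h.symm r2 hr2) hf2
    · exact h
  refine ⟨hpos, ?_⟩
  set m : ℝ → ℝ := fun r => N r + c * f r with hm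
  set C4 : ℝ := C2 + |c| with hC4
  have hC40 : 0 ≤ C4 := by positivity
  have hmb : ∀ r, 0 < r → |m r| ≤ C4 * f r := by
    intro r hr
    refine (abs_add_le _ _).trans ?_
    rw [abs_mul, abs_of_pos (hpos r hr), hC4]
    have := hNb r hr
    nlinarith
  have hpd : ∀ r, 0 < r → HasDerivAt (fun r => f r - 2 * m r * (r ^ 2)⁻¹)
      (4 * m r / r ^ 3) r := by
    intro r hr
    have h1 := (hmd r hr).const_mul 2
    have h2 := (hasDerivAt_pow 2 r).inv (by positivity)
    refine ((hfd r hr).sub (h1.mul h2)).congr_deriv ?_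
    simp only [hm, Pi.inv_apply]
    field_simp
    norm_num
    ring
  have hmb2 : ∀ r, 0 < r → |2 * m r * (r ^ 2)⁻¹| ≤ 2 * C4 * (r ^ 2)⁻¹ * f r := by
    intro r hr
    rw [abs_mul, abs_mul, abs_of_pos (by norm_num : (0:ℝ) < 2),
        abs_of_nonneg (by positivity : (0:ℝ) ≤ (r ^ 2)⁻¹)]
    have := mul_le_mul_of_nonneg_right (hmb r hr) (by positivity : (0:ℝ) ≤ 2 * (r ^ 2)⁻¹)
    linarith
  have hmb3 : ∀ r, 0 < r → |2 * m r * (r ^ 2)⁻¹| ≤ 4 * C4 * (r ^ 2)⁻¹ := by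
    intro r hr
    refine (hmb2 r hr).trans ?_
    have := mul_le_mul_of_nonneg_left (hf r hr).2 (by positivity : (0:ℝ) ≤ 2 * C4 * (r ^ 2)⁻¹)
    linarith
  have hpdb : ∀ r, 0 < r → |4 * m r / r ^ 3| ≤ 4 * (C4 * f r) / r ^ 3 := by
    intro r hr
    rw [abs_div, abs_mul, abs_of_pos (by norm_num : (0:ℝ) < 4),
        abs_of_pos (by positivity : 0 < r ^ 3)]
    gcongr
    exact hmb r hr
  have hpdb2 : ∀ r, (1:ℝ) ≤ r → |4 * m r / r ^ 3| ≤ (4 * (C4 * 2)) / r ^ 3 := by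
    intro r hr
    have hr0 : 0 < r := by linarith
    refine (hpdb r hr0).trans ?_
    gcongr
    exact (hf r hr0).2
  have hinv1 : ∀ r : ℝ, 1 ≤ r → (r ^ 2)⁻¹ ≤ 1 := by
    intro r hr
    apply inv_le_one_of_one_le₀
    nlinarith
  obtain ⟨l, hl⟩ := aux_exists (fun r => f r - 2 * m r * (r ^ 2)⁻¹) _ (4 * (C4 * 2))
    (2 + 4 * C4) 1 one_pos (fun r hr => hpd r (by linarith)) hpdb2 (by positivity)
    (fun r hr => by
      have hr0 : 0 < r := by linarith
      have h1 := neg_le_of_abs_le (hmb3 r hr0)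
      have h2 := mul_le_mul_of_nonneg_left (hinv1 r hr) (by positivity : (0:ℝ) ≤ 4 * C4)
      have h3 := (hf r hr0).2
      linarith)
  have hrate := aux_rate _ _ (4 * (C4 * 2)) 1 l one_pos (fun r hr => hpd r (by linarith)) hpdb2 hl
  have hfrate : ∀ r, 1 ≤ r → |f r - l| ≤ (8 * C4) * (r ^ 2)⁻¹ := by
    intro r hr
    have hr0 : 0 < r := by linarith
    have h1 := hrate r hr
    have h2 := hmb3 r hr0
    have : f r - l = (f r - 2 * m r * (r ^ 2)⁻¹ - l) + 2 * m r * (r ^ 2)⁻¹ := by ring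
    rw [this]
    refine (abs_add_le _ _).trans ?_
    linarith
  have hflim : Tendsto f atTop (nhds l) := by
    rw [tendsto_iff_norm_sub_tendsto_zero]
    refine squeeze_zero' (Eventually.of_forall fun _ => norm_nonneg _) ?_ (aux_inv_sq (8 * C4))
    filter_upwards [eventually_ge_atTop 1] with r hr
    exact hfrate r hr
  have hl2 : l ≤ 2 := by
    refine le_of_tendsto hflim ?_
    filter_upwards [eventually_gt_atTop 0] with r hr
    exact (hf r hr).2
  -- positivity
  set r0 : ℝ := 4 * C4 + 1 with hr0
  have hr01 : 1 ≤ r0 := by linarith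
  have hhalf : ∀ r, r0 ≤ r → f r / 2 ≤ f r - 2 * m r * (r ^ 2)⁻¹ := by
    intro r hr
    have hrp : 0 < r := by linarith
    have h1 := le_of_abs_le (hmb2 r hrp)
    have h2 : 2 * C4 * (r ^ 2)⁻¹ ≤ 1 / 2 := by
      rw [← div_eq_mul_inv, div_le_iff₀ (by positivity)]
      nlinarith
    have := mul_le_mul_of_nonneg_right h2 (hpos r hrp).le
    linarith
  have hlpos : 0 < l := by
    refine aux_pos (fun r => f r - 2 * m r * (r ^ 2)⁻¹) _ (8 * C4) r0 l (by linarith) (by positivity)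
      (fun r hr => hpd r (by linarith)) ?_ ?_ ?_ hl
    · have := hhalf r0 le_rfl
      have := hpos r0 (by linarith)
      linarith
    · intro r hr
      have := hhalf r hr
      have := hpos r (by linarith)
      linarith
    · intro r hr
      have hrp : 0 < r := by linarith
      refine (hpdb r hrp).trans ?_
      have := mul_le_mul_of_nonneg_left (hhalf r hr) (by positivity : (0:ℝ) ≤ 8 * C4)
      refine div_le_div_of_nonneg_right ?_ (by positivity)
      linarith
  refine ⟨l, hlpos, hl2, hflim, ⟨_, hfrate⟩, ?_⟩
  rintro rfl
  exact core_pi f fd N U c C3 hC30 hf hfd hmd hU0 hUb hN hflim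

lemma sim_acc (k b c μ : ℝ) (W : ℝ → Fin 3 → ℝ) (r : ℝ)
    (h : deriv (deriv W) r + dot3 (deriv W r) (deriv W r) • W r + (1 / r) • deriv W r
      + (deriv (gfun k b) (dot3 (W r) e0) / r ^ 2) • (e0 - dot3 (W r) e0 • W r)
      + μ • (e0 - dot3 (W r) e0 • W r)
      + (c / r - r / 2) • cross3 (W r) (deriv W r) = 0) :
    (deriv (deriv W) r 0 = -(dot3 (deriv W r) (deriv W r) * W r 0 + 1 / r * deriv W r 0
      + (deriv (gfun k b) (W r 0) / r ^ 2 + μ) * (1 - W r 0 * W r 0)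
      + (c / r - r / 2) * (W r 1 * deriv W r 2 - W r 2 * deriv W r 1))) ∧
    (deriv (deriv W) r 1 = -(dot3 (deriv W r) (deriv W r) * W r 1 + 1 / r * deriv W r 1
      + (deriv (gfun k b) (W r 0) / r ^ 2 + μ) * (0 - W r 0 * W r 1)
      + (c / r - r / 2) * (W r 2 * deriv W r 0 - W r 0 * deriv W r 2))) ∧
    (deriv (deriv W) r 2 = -(dot3 (deriv W r) (deriv W r) * W r 2 + 1 / r * deriv W r 2
      + (deriv (gfun k b) (W r 0) / r ^ 2 + μ) * (0 - W r 0 * W r 2)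
      + (c / r - r / 2) * (W r 0 * deriv W r 1 - W r 1 * deriv W r 0))) := by
  have hdot : dot3 (W r) e0 = W r 0 := by simp [dot3, e0]
  rw [hdot] at h
  have h0 := congrFun h 0
  have h1 := congrFun h 1
  have h2 := congrFun h 2
  simp only [Pi.add_apply, Pi.smul_apply, Pi.sub_apply, Pi.zero_apply, smul_eq_mul, cross3, e0,
    Matrix.cons_val_zero, Matrix.cons_val_one, Matrix.cons_val] at h0 h1 h2
  refine ⟨?_, ?_, ?_⟩
  · linear_combination h0
  · linear_combination h1
  · linear_combination h2

lemma sim_m (x0 x1 x2 v0 v1 v2 a1 a2 r c κ D : ℝ) (hr : r ≠ 0)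
    (hu : x0 * x0 + x1 * x1 + x2 * x2 = 1) (ho : x0 * v0 + x1 * v1 + x2 * v2 = 0)
    (h1 : a1 = -(D * x1 + 1 / r * v1 + κ * (0 - x0 * x1)
      + (c / r - r / 2) * (x2 * v0 - x0 * v2)))
    (h2 : a2 = -(D * x2 + 1 / r * v2 + κ * (0 - x0 * x2)
      + (c / r - r / 2) * (x0 * v1 - x1 * v0))) :
    (x1 * v2 - x2 * v1) + r * (v1 * v2 + x1 * a2 - (v2 * v1 + x2 * a1)) + c * -v0
      = r ^ 2 / 2 * -v0 := by
  have hinv : r * (1 / r) = 1 := by field_simp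
  have hc : r * (c / r - r / 2) = c - r ^ 2 / 2 := by field_simp
  have e : r * (x1 * a2 - x2 * a1) = -(r * (1 / r)) * (x1 * v2 - x2 * v1)
      - (r * (c / r - r / 2)) * (x1 * (x0 * v1 - x1 * v0) - x2 * (x2 * v0 - x0 * v2)) := by
    rw [h1, h2]; ring
  rw [hinv, hc] at e
  linear_combination e + (c - r ^ 2 / 2) * v0 * hu - (c - r ^ 2 / 2) * x0 * ho

lemma sim_e (x0 x1 x2 v0 v1 v2 a0 a1 a2 r c μ γ D : ℝ) (hr : r ≠ 0)
    (hu : x0 * x0 + x1 * x1 + x2 * x2 = 1) (ho : x0 * v0 + x1 * v1 + x2 * v2 = 0)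
    (h0 : a0 = -(D * x0 + 1 / r * v0 + (γ / r ^ 2 + μ) * (1 - x0 * x0)
      + (c / r - r / 2) * (x1 * v2 - x2 * v1)))
    (h1 : a1 = -(D * x1 + 1 / r * v1 + (γ / r ^ 2 + μ) * (0 - x0 * x1)
      + (c / r - r / 2) * (x2 * v0 - x0 * v2)))
    (h2 : a2 = -(D * x2 + 1 / r * v2 + (γ / r ^ 2 + μ) * (0 - x0 * x2)
      + (c / r - r / 2) * (x0 * v1 - x1 * v0))) :
    r * (v0 * v0 + v1 * v1 + v2 * v2) + r ^ 2 * (v0 * a0 + v1 * a1 + v2 * a2) + γ * v0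
      + μ * r ^ 2 * v0 = 0 := by
  have hinv : r ^ 2 * (1 / r) = r := by field_simp
  have hc : r ^ 2 * (γ / r ^ 2 + μ) = γ + μ * r ^ 2 := by field_simp
  have e : r ^ 2 * (v0 * a0 + v1 * a1 + v2 * a2) =
      -(r ^ 2 * D) * (x0 * v0 + x1 * v1 + x2 * v2)
      - (r ^ 2 * (1 / r)) * (v0 * v0 + v1 * v1 + v2 * v2)
      - (r ^ 2 * (γ / r ^ 2 + μ)) * (v0 - x0 * (x0 * v0 + x1 * v1 + x2 * v2)) := by
    rw [h0, h1, h2]; ring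
  rw [hinv, hc, ho] at e
  linear_combination e

lemma sim_pyth (x0 x1 x2 v0 v1 v2 : ℝ)
    (hu : x0 * x0 + x1 * x1 + x2 * x2 = 1) (ho : x0 * v0 + x1 * v1 + x2 * v2 = 0) :
    (v0 * v0 + v1 * v1 + v2 * v2) * ((1 - x0) * (2 - (1 - x0)))
      = v0 ^ 2 + (x1 * v2 - x2 * v1) ^ 2 := by
  have e1 : (x1 * v2 - x2 * v1) ^ 2 = (x1 * x1 + x2 * x2) * (v1 * v1 + v2 * v2)
    - (x1 * v1 + x2 * v2) ^ 2 := by ring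
  have e2 : x1 * v1 + x2 * v2 = -(x0 * v0) := by linarith
  have e3 : x1 * x1 + x2 * x2 = 1 - x0 * x0 := by linarith
  rw [e1, e2, e3]; ring

/-- Sphere case, `c² < −4(bk + k²)`: for a nonconstant similarity spherical profile
emanating from the north pole, `s(r) = arccos(W(r)·e₀)` converges to some
`s⋆ ∈ (0, min{π, s₁}]` at rate `O(r⁻²)`, where
`s₁ = sup{ŝ > 0 : H ≥ 0 on (0,ŝ]}`. -/
theorem stmt16 (k b c μ : ℝ) (hb : c ^ 2 < -4 * (b * k + k ^ 2))
    (W : ℝ → Fin 3 → ℝ)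
    (hprof : IsSimProfile k b c μ (Ioi 0) W)
    (hnonconst : ∃ r₁ > (0:ℝ), ∃ r₂ > (0:ℝ), W r₁ ≠ W r₂)
    (hlim0 : Tendsto W (nhdsWithin 0 (Ioi 0)) (nhds e0))
    (hlim1 : Tendsto (fun r => r * norm3 (deriv W r)) (nhdsWithin 0 (Ioi 0)) (nhds 0)) :
    ∃ sstar : ℝ,
      Tendsto (fun r => Real.arccos (dot3 (W r) e0)) atTop (nhds sstar) ∧
      0 < sstar ∧
      ((sstar : EReal) ≤
        min ((Real.pi : ℝ) : EReal)
          (sSup ((fun x : ℝ => (x : EReal)) ''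
            {shat : ℝ | 0 < shat ∧ ∀ s ∈ Ioc (0:ℝ) shat, 0 ≤ Hfun k b c μ s}))) ∧
      (fun r => Real.arccos (dot3 (W r) e0) - sstar)
        =O[atTop] (fun r : ℝ => (r ^ 2)⁻¹) := by
  obtain ⟨-, hdiff, hsph, hode⟩ := hprof
  have hx : ∀ i r, 0 < r → HasDerivAt (fun r => W r i) (deriv W r i) r := fun i r hr =>
    hasDerivAt_pi.1 (hdiff r hr).1.hasDerivAt i
  have hv : ∀ i r, 0 < r → HasDerivAt (fun r => deriv W r i) (deriv (deriv W) r i) r :=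
    fun i r hr => hasDerivAt_pi.1 (hdiff r hr).2.hasDerivAt i
  have hunit : ∀ r, 0 < r → W r 0 * W r 0 + W r 1 * W r 1 + W r 2 * W r 2 = 1 := hsph
  have horth : ∀ r, 0 < r →
      W r 0 * deriv W r 0 + W r 1 * deriv W r 1 + W r 2 * deriv W r 2 = 0 := by
    intro r hr
    have h1 := (((hx 0 r hr).mul (hx 0 r hr)).add ((hx 1 r hr).mul (hx 1 r hr))).add
      ((hx 2 r hr).mul (hx 2 r hr))
    have h2 := (hasDerivAt_const r (1:ℝ)).congr_of_eventuallyEq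
      (f₁ := (fun r => W r 0) * (fun r => W r 0) + (fun r => W r 1) * (fun r => W r 1)
        + (fun r => W r 2) * (fun r => W r 2)) (by
        filter_upwards [Ioi_mem_nhds hr] with y hy
        exact hunit y hy)
    have h3 := h1.unique h2
    linarith
  have hdot : ∀ r, dot3 (W r) e0 = W r 0 := by
    intro r; simp [dot3, e0]
  have hacc := fun r (hr : 0 < r) => sim_acc k b c μ W r (hode r hr)
  have hgd : ∀ w, HasDerivAt (gfun k b) (deriv (gfun k b) w) w := by
    intro w
    apply DifferentiableAt.hasDerivAt
    unfold gfun
    fun_prop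
  set f : ℝ → ℝ := fun r => 1 - W r 0 with hf
  set N : ℝ → ℝ := fun r => r * (W r 1 * deriv W r 2 - W r 2 * deriv W r 1) with hN
  set U : ℝ → ℝ := fun r => r ^ 2 * dot3 (deriv W r) (deriv W r) with hU
  have hfd : ∀ r, 0 < r → HasDerivAt f (-deriv W r 0) r := fun r hr => (hx 0 r hr).const_sub 1
  have hmd : ∀ r, 0 < r → HasDerivAt (fun r => N r + c * f r) (r ^ 2 / 2 * -deriv W r 0) r := by
    intro r hr
    have h := ((hasDerivAt_id r).mul (((hx 1 r hr).mul (hv 2 r hr)).sub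
      ((hx 2 r hr).mul (hv 1 r hr)))).add ((hfd r hr).const_mul c)
    refine h.congr_deriv ?_
    obtain ⟨-, a1, a2⟩ := hacc r hr
    have := sim_m _ _ _ _ _ _ _ _ _ _ _ _ hr.ne' (hunit r hr) (horth r hr) a1 a2
    simp only [id, Pi.sub_apply, Pi.mul_apply]
    linarith
  have hE : ∀ r, 0 < r → HasDerivAt
      (fun r => U r / 2 + gfun k b (W r 0) - 2 * μ * (N r + c * f r)) 0 r := by
    intro r hr
    have h1 := ((((hasDerivAt_pow 2 r).mul ((((hv 0 r hr).mul (hv 0 r hr)).add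
      ((hv 1 r hr).mul (hv 1 r hr))).add ((hv 2 r hr).mul (hv 2 r hr)))).div_const 2).add
      ((hgd (W r 0)).comp r (hx 0 r hr))).sub ((hmd r hr).const_mul (2 * μ))
    refine h1.congr_deriv ?_
    obtain ⟨a0, a1, a2⟩ := hacc r hr
    have := sim_e _ _ _ _ _ _ _ _ _ _ _ _ _ _ hr.ne' (hunit r hr) (horth r hr) a0 a1 a2
    simp only [Pi.add_apply, Pi.mul_apply]
    norm_num
    linarith
  have hNU : ∀ r, 0 < r → N r ^ 2 ≤ U r * (f r * (2 - f r)) ∧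
      (r * -deriv W r 0) ^ 2 ≤ U r * (f r * (2 - f r)) := by
    intro r hr
    have h := sim_pyth _ _ _ _ _ _ (hunit r hr) (horth r hr)
    have e1 : U r * (f r * (2 - f r)) = (r * deriv W r 0) ^ 2 + N r ^ 2 := by
      simp only [hU, hf, hN, dot3]
      linear_combination r ^ 2 * h
    rw [e1]
    constructor
    · nlinarith [sq_nonneg (r * deriv W r 0)]
    · nlinarith [sq_nonneg (N r)]
  have hU0 : ∀ r, 0 ≤ U r := by
    intro r
    simp only [hU, dot3]
    nlinarith [mul_nonneg (sq_nonneg r) (mul_self_nonneg (deriv W r 0)),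
      mul_nonneg (sq_nonneg r) (mul_self_nonneg (deriv W r 1)),
      mul_nonneg (sq_nonneg r) (mul_self_nonneg (deriv W r 2))]
  have hW1 : ∀ r, 0 < r → -1 ≤ W r 0 ∧ W r 0 ≤ 1 := by
    intro r hr
    have := hunit r hr
    constructor <;> nlinarith [mul_self_nonneg (W r 1), mul_self_nonneg (W r 2)]
  have hf02 : ∀ r, 0 < r → 0 ≤ f r ∧ f r ≤ 2 := by
    intro r hr
    have := hW1 r hr
    simp only [hf]
    constructor <;> linarith
  -- limits at zero
  have hw0 : Tendsto (fun r => W r 0) (nhdsWithin 0 (Ioi 0)) (nhds 1) := by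
    have := (tendsto_pi_nhds.1 hlim0) 0
    simpa [e0] using this
  have hf0 : Tendsto f (nhdsWithin 0 (Ioi 0)) (nhds 0) := by
    simpa using hw0.const_sub 1
  have hUl : Tendsto U (nhdsWithin 0 (Ioi 0)) (nhds 0) := by
    have h := hlim1.pow 2
    simp only [ne_eq, OfNat.ofNat_ne_zero, not_false_eq_true, zero_pow] at h
    refine h.congr fun r => ?_
    simp only [hU, norm3, mul_pow]
    rw [Real.sq_sqrt]
    unfold dot3
    nlinarith [mul_self_nonneg (deriv W r 0), mul_self_nonneg (deriv W r 1),
      mul_self_nonneg (deriv W r 2)]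
  have hNl : Tendsto N (nhdsWithin 0 (Ioi 0)) (nhds 0) := by
    have h : Tendsto (fun r => Real.sqrt (U r * (f r * (2 - f r)))) (nhdsWithin 0 (Ioi 0))
        (nhds 0) := by
      simpa using (hUl.mul (hf0.mul (hf0.const_sub 2))).sqrt
    refine squeeze_zero_norm' ?_ h
    filter_upwards [self_mem_nhdsWithin] with r hr
    exact Real.abs_le_sqrt (hNU r hr).1
  have hgl : Tendsto (fun r => gfun k b (W r 0)) (nhdsWithin 0 (Ioi 0)) (nhds 0) := by
    have h := (hgd 1).continuousAt.tendsto.comp hw0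
    have h1 : gfun k b 1 = 0 := by simp [gfun]
    rwa [h1] at h
  have hEl : Tendsto (fun r => U r / 2 + gfun k b (W r 0) - 2 * μ * (N r + c * f r))
      (nhdsWithin 0 (Ioi 0)) (nhds 0) := by
    simpa using ((hUl.div_const 2).add hgl).sub ((hNl.add (hf0.const_mul c)).const_mul (2 * μ))
  have hE0 : ∀ r, 0 < r → U r = -2 * gfun k b (W r 0) + 4 * μ * (N r + c * f r) := by
    intro r hr
    have hcst : ∀ y, 0 < y → U y / 2 + gfun k b (W y 0) - 2 * μ * (N y + c * f y) =
        U r / 2 + gfun k b (W r 0) - 2 * μ * (N r + c * f r) := by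
      intro y hy
      exact isOpen_Ioi.is_const_of_deriv_eq_zero (s := Ioi (0:ℝ)) isPreconnected_Ioi
        (fun z hz => (hE z hz).differentiableAt.differentiableWithinAt)
        (fun z hz => (hE z hz).deriv) hy hr
    have h2 := tendsto_nhds_unique hEl ((tendsto_const_nhds (x := U r / 2 + gfun k b (W r 0)
      - 2 * μ * (N r + c * f r))).congr' (by
        filter_upwards [self_mem_nhdsWithin] with y hy
        exact (hcst y hy).symm))
    linarith
  have hUb : ∀ r, 0 < r → U r ≤ (2 * |k ^ 2 + b * k| + 6 * k ^ 2 + 4 * |μ * c|) * f r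
      + 4 * |μ| * |N r| := by
    intro r hr
    rw [hE0 r hr]
    obtain ⟨h0, h2⟩ := hf02 r hr
    have e1 : gfun k b (W r 0) = (k ^ 2 + b * k) * f r - 3 / 2 * k ^ 2 * f r ^ 2 := by
      simp only [gfun, hf]; ring
    rw [e1]
    have i1 := mul_le_mul_of_nonneg_right (neg_le_abs (k ^ 2 + b * k)) h0
    have i2 := mul_le_mul_of_nonneg_right (le_abs_self (μ * c)) h0
    have i3 : μ * N r ≤ |μ| * |N r| := by rw [← abs_mul]; exact le_abs_self _
    have i4 : k ^ 2 * f r ^ 2 ≤ k ^ 2 * (2 * f r) := by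
      apply mul_le_mul_of_nonneg_left _ (sq_nonneg k)
      nlinarith
    nlinarith
  have hne : ∃ r, 0 < r ∧ f r ≠ 0 := by
    by_contra hcon
    push Not at hcon
    obtain ⟨r₁, h1, r₂, h2, h12⟩ := hnonconst
    have hall : ∀ r, 0 < r → W r = e0 := by
      intro r hr
      have a0 : W r 0 = 1 := by have := hcon r hr; simp only [hf] at this; linarith
      have hu := hunit r hr
      rw [a0] at hu
      have a1 : W r 1 = 0 := by
        apply mul_self_eq_zero.1
        nlinarith [mul_self_nonneg (W r 1), mul_self_nonneg (W r 2)]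
      have a2 : W r 2 = 0 := by
        apply mul_self_eq_zero.1
        nlinarith [mul_self_nonneg (W r 1), mul_self_nonneg (W r 2)]
      ext i
      fin_cases i <;> simp [e0, a0, a1, a2]
    exact h12 ((hall r₁ h1).trans (hall r₂ h2).symm)
  obtain ⟨hfpos, l, hl0, hl2, hfl, ⟨K, hK⟩, hpi⟩ := core f _ N U c _ (4 * |μ|) (by positivity)
    (by positivity) hf02 hfd hmd (fun r _ => hU0 r) hUb (fun r hr => (hNU r hr).1)
    (fun r hr => (hNU r hr).2) hne
  have hH : ∀ r, 0 < r → 0 ≤ Hfun k b c μ (Real.arccos (W r 0)) := by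
    intro r hr
    obtain ⟨w1, w2⟩ := hW1 r hr
    have hs : Real.sin (Real.arccos (W r 0)) ^ 2 = 1 - W r 0 ^ 2 := by
      rw [Real.sin_sq, Real.cos_arccos w1 w2]
    have e1 : Hfun k b c μ (Real.arccos (W r 0)) = U r - 4 * μ * N r
        + 4 * μ ^ 2 * (f r * (2 - f r)) := by
      rw [hE0 r hr]
      simp only [Hfun, Gsph, hs, Real.cos_arccos w1 w2, gfun, hf]
      ring
    rw [e1]
    obtain ⟨f0, f2⟩ := hf02 r hr
    have hn := (hNU r hr).1
    have hu := hU0 r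
    set q := f r * (2 - f r) with hq
    have q0 : 0 ≤ q := mul_nonneg f0 (by linarith)
    rcases q0.eq_or_lt with h | h
    · rw [← h] at hn ⊢
      have : N r = 0 := by
        apply pow_eq_zero_iff (two_ne_zero) |>.1
        nlinarith [sq_nonneg (N r)]
      rw [this]; linarith
    · have : 0 ≤ q * (U r - 4 * μ * N r + 4 * μ ^ 2 * q) := by
        nlinarith [sq_nonneg (N r - 2 * μ * q)]
      exact nonneg_of_mul_nonneg_right this h
  set s : ℝ → ℝ := fun r => Real.arccos (W r 0) with hs
  have hsW : (fun r => Real.arccos (dot3 (W r) e0)) = s := by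
    funext r; rw [hdot]
  have hwl : Tendsto (fun r => W r 0) atTop (nhds (1 - l)) := by
    refine (hfl.const_sub 1).congr fun r => ?_
    simp only [hf]; ring
  have hsl : Tendsto s atTop (nhds (Real.arccos (1 - l))) :=
    (Real.continuous_arccos.tendsto _).comp hwl
  have hs0 : Tendsto s (nhdsWithin 0 (Ioi 0)) (nhds 0) := by
    have := (Real.continuous_arccos.tendsto 1).comp hw0
    rwa [Real.arccos_one] at this
  have hsc : ContinuousOn s (Ioi 0) := by
    intro r hr
    exact (Real.continuous_arccos.continuousAt.comp
      (hx 0 r hr).continuousAt).continuousWithinAt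
  have hspos : ∀ r, 0 < r → 0 < s r := by
    intro r hr
    apply Real.arccos_pos.2
    have := hfpos r hr
    simp only [hf] at this; linarith
  have hmem : ∀ r, 0 < r → s r ∈
      {shat : ℝ | 0 < shat ∧ ∀ s ∈ Ioc (0:ℝ) shat, 0 ≤ Hfun k b c μ s} := by
    intro r hr
    refine ⟨hspos r hr, fun t ht => ?_⟩
    have h1 : ∀ᶠ ε in nhdsWithin (0:ℝ) (Ioi 0), s ε < t := hs0.eventually_lt_const ht.1
    have h2 : ∀ᶠ ε in nhdsWithin (0:ℝ) (Ioi 0), ε < r :=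
      (tendsto_id.mono_left nhdsWithin_le_nhds).eventually_lt_const hr
    obtain ⟨ε, ⟨e1, e2⟩, e3⟩ := ((h1.and h2).and self_mem_nhdsWithin).exists
    have e3' : 0 < ε := e3
    obtain ⟨ρ, hρ, hρt⟩ := intermediate_value_Icc e2.le
      (hsc.mono fun z hz => lt_of_lt_of_le e3' hz.1) ⟨e1.le, ht.2⟩
    rw [← hρt]
    exact hH ρ (lt_of_lt_of_le e3' hρ.1)
  refine ⟨Real.arccos (1 - l), ?_, ?_, ?_, ?_⟩
  · rw [hsW]; exact hsl
  · exact Real.arccos_pos.2 (by linarith)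
  · refine le_min (EReal.coe_le_coe_iff.2 (Real.arccos_le_pi _)) ?_
    refine le_of_tendsto ((continuous_coe_real_ereal.tendsto _).comp hsl) ?_
    filter_upwards [eventually_gt_atTop 0] with r hr
    exact le_sSup ⟨s r, hmem r hr, rfl⟩
  · have hs' : ∀ r, Real.arccos (dot3 (W r) e0) = s r := fun r => congrFun hsW r
    simp only [hs']
    rcases hl2.eq_or_lt with h | h
    · obtain ⟨K2, hK2⟩ := hpi h
      have hpi' : Real.arccos (1 - l) = Real.pi := by rw [h]; norm_num
      rw [hpi']
      refine IsBigO.of_bound (Real.pi * K2) ?_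
      filter_upwards [eventually_ge_atTop 1] with r hr
      have hr0 : 0 < r := by linarith
      have hk := hK2 r hr
      obtain ⟨w1, w2⟩ := hW1 r hr0
      have hsp : s r ≤ Real.pi := Real.arccos_le_pi _
      have hsr := hspos r hr0
      rw [Real.norm_eq_abs, abs_sub_comm, abs_of_nonneg (by linarith), Real.norm_eq_abs,
        abs_of_nonneg (by positivity)]
      have hc := Real.cos_le_one_sub_mul_cos_sq (x := Real.pi - s r)
        (by rw [abs_of_nonneg (by linarith)]; linarith)
      rw [Real.cos_pi_sub, Real.cos_arccos w1 w2] at hc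
      have hpp := Real.pi_pos
      have hy : 2 - f r = 1 + W r 0 := by simp only [hf]; ring
      have h3 : (Real.pi - s r) ^ 2 ≤ Real.pi ^ 2 * (2 - f r) := by
        rw [hy]
        have h4 : 2 / Real.pi ^ 2 * (Real.pi - s r) ^ 2 ≤ 1 + W r 0 := by linarith
        have h5 := mul_le_mul_of_nonneg_left h4 (sq_nonneg Real.pi)
        have h6 : Real.pi ^ 2 * (2 / Real.pi ^ 2 * (Real.pi - s r) ^ 2)
          = 2 * (Real.pi - s r) ^ 2 := by field_simp
        nlinarith [sq_nonneg (Real.pi - s r)]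
      have h7 : Real.pi - s r ≤ Real.pi * Real.sqrt (2 - f r) := by
        refine le_of_abs_le (abs_le_of_sq_le_sq ?_ (by positivity))
        rw [mul_pow, Real.sq_sqrt (by linarith [(hf02 r hr0).2])]
        exact h3
      calc Real.pi - s r ≤ Real.pi * Real.sqrt (2 - f r) := h7
        _ ≤ Real.pi * (K2 * (r ^ 2)⁻¹) := by gcongr
        _ = Real.pi * K2 * (r ^ 2)⁻¹ := by ring
    · have hder := (Real.hasDerivAt_arccos (x := 1 - l) (by linarith) (by linarith)).isBigO_sub
      refine (hder.comp_tendsto hwl).trans ?_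
      refine IsBigO.of_bound K ?_
      filter_upwards [eventually_ge_atTop 1] with r hr
      have hr0 : 0 < r := by linarith
      rw [Real.norm_eq_abs, Real.norm_eq_abs, abs_of_nonneg (by positivity : 0 ≤ (r ^ 2)⁻¹)]
      refine le_trans (le_of_eq ?_) (hK r hr)
      rw [abs_sub_comm]
      simp only [hf, Function.comp]
      congr 1; ring
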